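/- Let m, m_t, m_r be positive integers with m_t ≤ m_r and m_t + m_r ≤ m. Let U be Haar distributed on the unitary group U(m) and let H be the upper-left m_r×m_t block of U. Then det(HᴴH) > 0 almost surely and E[ln det(HᴴH)] = − Σ_{j=0}^{m_t−1} Σ_{k=0}^{m−m_r−1} 1/(m_r + k − j). Equivalently, E[ln det(HᴴH)] = Σ_{j=0}^{m_t−1} (H_{m_r−j−1} − H_{m−j−1}), where H_n denotes the n-th harmonic number (this is the digamma expression Σ_{j=0}^{m_t−1} (ψ(m_r−j) − ψ(m−j))). -/

import Mathlib

open MeasureTheory Matrix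

/-- Borel measurable-space structure on the unitary group `U(m)`. -/
noncomputable instance (m : ℕ) : MeasurableSpace (Matrix.unitaryGroup (Fin m) ℂ) := borel _

instance (m : ℕ) : BorelSpace (Matrix.unitaryGroup (Fin m) ℂ) := ⟨rfl⟩

/-- The MIMO Jacobi fading channel matrix: the upper-left `mr × mt` block of a
unitary `m × m` matrix `U`. -/
noncomputable def jacobiH (m mt mr : ℕ) (hr : mr ≤ m) (ht : mt ≤ m)
    (U : Matrix.unitaryGroup (Fin m) ℂ) : Matrix (Fin mr) (Fin mt) ℂ :=
  (U : Matrix (Fin m) (Fin m) ℂ).submatrix (Fin.castLE hr) (Fin.castLE ht)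

/-- The ergodic capacity `E[ln det (I + s · Hᴴ H)]` of the MIMO Jacobi fading channel,
the expectation being taken with respect to the measure `μ` on the unitary group. -/
noncomputable def ergodicCapacity (m mt mr : ℕ) (hr : mr ≤ m) (ht : mt ≤ m) (s : ℝ)
    (μ : Measure (Matrix.unitaryGroup (Fin m) ℂ)) : ℝ :=
  ∫ U, Real.log ((Matrix.det ((1 : Matrix (Fin mt) (Fin mt) ℂ) +
      (s : ℂ) • ((jacobiH m mt mr hr ht U)ᴴ * jacobiH m mt mr hr ht U))).re) ∂μ

/-!
Let `x` consist of `t` independent standard Gaussian vectors in `ℂᵐ`, and let `R` be the first `r`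
rows of a unitary matrix `U`. Because `R Rᴴ = 1`, the vectors `R x₁, …, R xₜ` are again independent
standard Gaussians, now in `ℂʳ`. On the other hand, writing `x = Q T` with `Q` having orthonormal
columns, the Gram determinant of `R x` is `|det T|² = det (xᴴ x)` times `det (Hᴴ H)` for the block
`H` of `U W`, where `W` is a unitary matrix extending `Q`; if `U` is Haar distributed, so is `U W`.
Hence the Gaussian Gram determinant in `ℂʳ` is, in law, the product of the one in `ℂᵐ` with an
independent copy of `det (Hᴴ H)`, and the logarithmic means subtract.

The Gaussian means follow from base times height: peeling off one vector splits the Gram determinant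
in `ℂⁿ⁺¹` into an independent factor `‖g‖²`, Gamma distributed with shape `n + 1`, and a Gram
determinant of one vector fewer in `ℂⁿ`. The logarithmic mean of the Gamma law is a digamma value.
-/

/-- `HasLogMean ν c`: a random variable `X` with law `ν` is almost surely positive and `log X` is
integrable with mean `c`. -/
structure HasLogMean (ν : Measure ℝ) (c : ℝ) : Prop where
  ae_pos : ∀ᵐ x ∂ν, 0 < x
  integrable_log : Integrable Real.log ν
  integral_log : ∫ x, Real.log x ∂ν = c

lemma ae_log_mul_eq_add {μ ν : Measure ℝ} (hμ : ∀ᵐ x ∂μ, 0 < x) (hν : ∀ᵐ y ∂ν, 0 < y) :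
    (fun p : ℝ × ℝ ↦ Real.log (p.1 * p.2)) =ᵐ[μ.prod ν]
      fun p ↦ Real.log p.1 + Real.log p.2 := by
  filter_upwards [Measure.quasiMeasurePreserving_fst.ae hμ,
    Measure.quasiMeasurePreserving_snd.ae hν] with p hx hy
  exact Real.log_mul hx.ne' hy.ne'

namespace HasLogMean

lemma dirac_one : HasLogMean (Measure.dirac 1) 0 where
  ae_pos := by simp
  integrable_log := integrable_dirac (by simp)
  integral_log := by simp

variable {μ ν : Measure ℝ} [IsProbabilityMeasure μ] [IsProbabilityMeasure ν] {a c : ℝ}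

lemma mconv (hμ : HasLogMean μ a) (hν : HasLogMean ν c) : HasLogMean (μ ∗ₘ ν) (a + c) := by
  have hmul : AEMeasurable (fun p : ℝ × ℝ ↦ p.1 * p.2) (μ.prod ν) := by fun_prop
  have hlog := ae_log_mul_eq_add hμ.ae_pos hν.ae_pos
  have hfst := hμ.integrable_log.comp_fst ν
  have hsnd := hν.integrable_log.comp_snd μ
  refine ⟨?_, ?_, ?_⟩
  · rw [Measure.mconv, ae_map_iff hmul measurableSet_Ioi]
    filter_upwards [Measure.quasiMeasurePreserving_fst.ae hμ.ae_pos,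
      Measure.quasiMeasurePreserving_snd.ae hν.ae_pos] with p hx hy
    exact mul_pos hx hy
  · rw [Measure.mconv, integrable_map_measure (by fun_prop) hmul]
    exact (hfst.add hsnd).congr hlog.symm
  · rw [Measure.mconv, integral_map hmul (by fun_prop), integral_congr_ae hlog,
      integral_add hfst hsnd, integral_fun_fst, integral_fun_snd, hμ.integral_log, hν.integral_log]
    simp

lemma of_mconv_left (hμ : HasLogMean μ a) (h : HasLogMean (μ ∗ₘ ν) c) :
    HasLogMean ν (c - a) := by
  have hmul : AEMeasurable (fun p : ℝ × ℝ ↦ p.1 * p.2) (μ.prod ν) := by fun_prop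
  have hpos : ∀ᵐ y ∂ν, 0 < y := by
    have hprod := Measure.ae_ae_of_ae_prod ((ae_map_iff hmul measurableSet_Ioi).1 h.ae_pos)
    obtain ⟨x, hx, hxy⟩ := (hμ.ae_pos.and hprod).exists
    exact hxy.mono fun y hy ↦ (pos_iff_pos_of_mul_pos hy).1 hx
  have hint : Integrable Real.log ν := by
    have hprod : Integrable (fun p : ℝ × ℝ ↦ Real.log p.1 + Real.log p.2) (μ.prod ν) :=
      ((integrable_map_measure (by fun_prop) hmul).1 h.integrable_log).congr
        (ae_log_mul_eq_add hμ.ae_pos hpos)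
    refine Integrable.of_comp_snd (f := Real.log) (μ := μ) ?_ (NeZero.ne μ)
    simpa [Pi.sub_def] using hprod.sub (hμ.integrable_log.comp_fst ν)
  have hν : HasLogMean ν (∫ y, Real.log y ∂ν) := ⟨hpos, hint, rfl⟩
  have hsum : a + ∫ y, Real.log y ∂ν = c := (hμ.mconv hν).integral_log.symm.trans h.integral_log
  rwa [← hsum, add_sub_cancel_left]

end HasLogMean

section Mixture

variable {α β γ : Type*} [MeasurableSpace α] [MeasurableSpace β] [MeasurableSpace γ]
  {μ : Measure α} {ν : Measure β}

lemma map_prod_eq_of_forall_map_eq [IsProbabilityMeasure μ] [SFinite ν] {ρ : Measure γ} [SFinite ρ]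
    {f : α × β → γ} (hf : Measurable f) (h : ∀ x, ν.map (fun y ↦ f (x, y)) = ρ) :
    (μ.prod ν).map f = ρ := by
  have hskew : MeasurePreserving (fun p : α × β ↦ (p.1, f p)) (μ.prod ν) (μ.prod ρ) :=
    (MeasurePreserving.id μ).skew_product (g := fun x y ↦ f (x, y)) hf (.of_forall h)
  exact (measurePreserving_snd.comp hskew).map_eq

lemma map_prod_eq_mconv [SFinite ν] {M : Type*} [Monoid M] [MeasurableSpace M]
    [MeasurableMul₂ M] {ρ : Measure M} [SFinite ρ] {f : α × β → M} (hf : Measurable f) {a : α → M}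
    (ha : Measurable a) (h : ∀ x, ν.map (fun y ↦ f (x, y)) = ρ.map (a x * ·)) :
    (μ.prod ν).map f = μ.map a ∗ₘ ρ := by
  refine Measure.ext_of_lintegral _ fun φ hφ ↦ ?_
  have hinner (x : α) : ∫⁻ y, φ (f (x, y)) ∂ν = ∫⁻ z, φ (a x * z) ∂ρ := by
    rw [← lintegral_map hφ (by fun_prop), h x, lintegral_map hφ (by fun_prop)]
  rw [lintegral_map hφ hf, lintegral_prod _ (by fun_prop), Measure.lintegral_mconv hφ,
    lintegral_map (by fun_prop) ha]
  exact lintegral_congr hinner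

end Mixture

section Gamma

open ProbabilityTheory Real Set Filter Asymptotics Topology

variable {a r : ℝ}

lemma gammaMeasure_eq_withDensity_restrict :
    gammaMeasure a r = (volume.restrict (Ioi 0)).withDensity
      fun x ↦ ENNReal.ofReal (r ^ a / Gamma a * x ^ (a - 1) * exp (-(r * x))) := by
  rw [gammaMeasure, ← withDensity_indicator measurableSet_Ioi]
  refine withDensity_congr_ae ?_
  filter_upwards [Measure.ae_ne volume (0 : ℝ)] with x hx
  rcases hx.lt_or_gt with h | h
  · simp [gammaPDF_of_neg h, h.le]
  · simp [gammaPDF_of_nonneg h.le, h]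

lemma integral_gammaMeasure (ha : 0 < a) (hr : 0 < r) (f : ℝ → ℝ) :
    ∫ x, f x ∂gammaMeasure a r =
      r ^ a / Gamma a * ∫ t in Ioi 0, t ^ (a - 1) * (exp (-(r * t)) * f t) := by
  rw [gammaMeasure_eq_withDensity_restrict,
    integral_withDensity_eq_integral_toReal_smul (by fun_prop) (by simp), ← integral_const_mul]
  refine setIntegral_congr_fun measurableSet_Ioi fun t (ht : 0 < t) ↦ ?_
  rw [ENNReal.toReal_ofReal (by positivity), smul_eq_mul]
  ring

lemma ofReal_cpow_smul_ofReal {t : ℝ} (ht : 0 ≤ t) (a y : ℝ) :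
    (t : ℂ) ^ ((a : ℂ) - 1) • (y : ℂ) = ((t ^ (a - 1) * y : ℝ) : ℂ) := by
  rw [smul_eq_mul, Complex.ofReal_mul, Complex.ofReal_cpow ht]
  push_cast
  rfl

lemma integrableOn_of_mellinConvergent_ofReal {f : ℝ → ℝ}
    (h : MellinConvergent (fun t ↦ (f t : ℂ)) a) :
    IntegrableOn (fun t ↦ t ^ (a - 1) * f t) (Ioi 0) :=
  (IntegrableOn.congr_fun h (fun t (ht : 0 < t) ↦ ofReal_cpow_smul_ofReal ht.le a (f t))
    measurableSet_Ioi).re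

lemma mellin_ofReal (f : ℝ → ℝ) :
    mellin (fun t ↦ (f t : ℂ)) a = ((∫ t in Ioi 0, t ^ (a - 1) * f t : ℝ) : ℂ) := by
  rw [← integral_complex_ofReal]
  exact setIntegral_congr_fun measurableSet_Ioi
    fun t (ht : 0 < t) ↦ ofReal_cpow_smul_ofReal ht.le a (f t)

lemma mellin_log_mul_exp_neg_mul (ha : 0 < a) (hr : 0 < r) :
    MellinConvergent (fun t ↦ ((log t * exp (-(r * t)) : ℝ) : ℂ)) a ∧
      HasDerivAt (mellin fun t ↦ (exp (-(r * t)) : ℂ))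
        (mellin (fun t ↦ ((log t * exp (-(r * t)) : ℝ) : ℂ)) a) a := by
  have hcont : Continuous fun t ↦ (exp (-(r * t)) : ℂ) := by fun_prop
  have htop : (fun t ↦ (exp (-(r * t)) : ℂ)) =O[atTop] (· ^ (-(a + 1))) := by
    rw [← isBigO_norm_left]
    simp_rw [Complex.norm_real, isBigO_norm_left, ← neg_mul]
    exact (isLittleO_exp_neg_mul_rpow_atTop hr _).isBigO
  have hbot : (fun t ↦ (exp (-(r * t)) : ℂ)) =O[𝓝[>] 0] (· ^ (-(0 : ℝ))) := by
    simp_rw [neg_zero, rpow_zero]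
    exact isBigO_const_of_tendsto ((hcont.tendsto' 0 1 (by simp)).mono_left nhdsWithin_le_nhds)
      one_ne_zero
  simpa only [Complex.real_smul, ← Complex.ofReal_mul] using
    mellin_hasDerivAt_of_isBigO_rpow (s := a) (hcont.locallyIntegrable.locallyIntegrableOn _) htop
      (by simp) hbot (by simpa)

lemma integral_rpow_mul_log_mul_exp_neg_mul (ha : 0 < a) (hr : 0 < r) :
    ∫ t in Ioi 0, t ^ (a - 1) * (log t * exp (-(r * t))) =
      (1 / r) ^ a * (deriv Gamma a - log r * Gamma a) := by
  have hderiv := (mellin_log_mul_exp_neg_mul ha hr).2.real_of_complex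
  simp_rw [mellin_ofReal, Complex.ofReal_re] at hderiv
  have hΓ : HasDerivAt Gamma (deriv Gamma a) a :=
    (differentiableAt_Gamma fun n ↦ (by linarith [n.cast_nonneg (α := ℝ)])).hasDerivAt
  have hformula := ((hasDerivAt_id a).const_rpow (a := 1 / r) (by positivity)).mul hΓ
  have heq : (fun b ↦ ∫ t in Ioi 0, t ^ (b - 1) * exp (-(r * t))) =ᶠ[𝓝 a]
      fun b ↦ (1 / r) ^ b * Gamma b := by
    filter_upwards [lt_mem_nhds ha] with b hb
    exact integral_rpow_mul_exp_neg_mul_Ioi hb hr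
  rw [hderiv.unique (hformula.congr_of_eventuallyEq heq), one_div, log_inv, id_eq]
  ring

lemma hasLogMean_gammaMeasure (ha : 0 < a) (hr : 0 < r) :
    HasLogMean (gammaMeasure a r) (deriv Gamma a / Gamma a - log r) where
  ae_pos := by
    rw [gammaMeasure_eq_withDensity_restrict]
    exact withDensity_absolutelyContinuous _ _ (ae_restrict_mem measurableSet_Ioi)
  integrable_log := by
    rw [gammaMeasure_eq_withDensity_restrict,
      integrable_withDensity_iff_integrable_smul' (by fun_prop) (by simp)]
    have hint := integrableOn_of_mellinConvergent_ofReal (mellin_log_mul_exp_neg_mul ha hr).1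
    refine IntegrableOn.congr_fun (hint.const_mul (r ^ a / Gamma a)) (fun t (ht : 0 < t) ↦ ?_)
      measurableSet_Ioi
    rw [ENNReal.toReal_ofReal (by positivity), smul_eq_mul]
    ring
  integral_log := by
    simp_rw [integral_gammaMeasure ha hr, mul_comm (exp _)]
    rw [integral_rpow_mul_log_mul_exp_neg_mul ha hr, div_rpow zero_le_one hr.le, one_rpow]
    field_simp

end Gamma

section Gauss

open ProbabilityTheory Real Set Module

variable {E : Type*} [NormedAddCommGroup E] [InnerProductSpace ℝ E] [FiniteDimensional ℝ E]
  [MeasurableSpace E] [BorelSpace E]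

lemma map_stdGaussian_of_inner_eq {F : Type*} [NormedAddCommGroup F] [InnerProductSpace ℝ F]
    [FiniteDimensional ℝ F] [MeasurableSpace F] [BorelSpace F]
    {f : E → F} (hf : Measurable f) {g : F → E}
    (hfg : ∀ x y, inner ℝ (f x) y = inner ℝ x (g y)) (hg : ∀ y, ‖g y‖ = ‖y‖) :
    (stdGaussian E).map f = stdGaussian F := by
  have := Measure.isProbabilityMeasure_map (μ := stdGaussian E) hf.aemeasurable
  refine Measure.ext_of_charFun (funext fun y ↦ ?_)
  rw [charFun_apply, integral_map hf.aemeasurable (by fun_prop)]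
  simp_rw [hfg]
  rw [← charFun_apply, charFun_stdGaussian, charFun_stdGaussian, hg]

variable (E) in
theorem stdGaussian_eq_withDensity :
    stdGaussian E = volume.withDensity fun x ↦
      ENNReal.ofReal ((2 * π) ^ (-(finrank ℝ E / 2 : ℝ)) * exp (-(1 / 2) * ‖x‖ ^ 2)) := by
  set c : ℝ := (2 * π) ^ (-(finrank ℝ E / 2 : ℝ)) with hc
  have hint : Integrable fun x : E ↦ exp (-(1 / 2) * ‖x‖ ^ 2) :=
    .of_integral_ne_zero <| by
      rw [GaussianFourier.integral_rexp_neg_mul_sq_norm (by norm_num)]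
      positivity
  have := isFiniteMeasure_withDensity_ofReal (hint.const_mul c).2
  refine Measure.ext_of_charFun (funext fun t ↦ ?_)
  have hdens (x : E) : (ENNReal.ofReal (c * exp (-(1 / 2) * ‖x‖ ^ 2))).toReal •
      Complex.exp (inner ℝ x t * Complex.I) =
        c * Complex.exp (-(1 / 2) * ‖x‖ ^ 2 + Complex.I * inner ℝ t x) := by
    rw [ENNReal.toReal_ofReal (by positivity), Complex.exp_add, Complex.real_smul, real_inner_comm,
      mul_comm Complex.I]
    push_cast
    ring
  have hnorm : (c : ℂ) * (π / (1 / 2)) ^ (finrank ℝ E / 2 : ℂ) = 1 := by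
    have hbase : (π / (1 / 2) : ℂ) ^ (finrank ℝ E / 2 : ℂ) =
        (((2 * π) ^ (finrank ℝ E / 2 : ℝ) : ℝ) : ℂ) := by
      rw [Complex.ofReal_cpow (by positivity)]
      push_cast
      congr 1
      ring
    rw [hbase, ← Complex.ofReal_mul, hc, ← rpow_add (by positivity), neg_add_cancel, rpow_zero,
      Complex.ofReal_one]
  rw [charFun_stdGaussian, charFun_apply, integral_withDensity_eq_integral_toReal_smul
    (by fun_prop) (by simp)]
  simp_rw [hdens]
  rw [integral_const_mul,
    GaussianFourier.integral_cexp_neg_mul_sq_norm_add (by norm_num), ← mul_assoc, hnorm,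
    Complex.I_sq, one_mul]
  ring_nf

lemma integral_stdGaussian (f : E → ℝ) :
    ∫ x, f x ∂stdGaussian E =
      (2 * π) ^ (-(finrank ℝ E / 2 : ℝ)) * ∫ x, exp (-(1 / 2) * ‖x‖ ^ 2) * f x := by
  rw [stdGaussian_eq_withDensity, ← integral_const_mul,
    integral_withDensity_eq_integral_toReal_smul (by fun_prop) (by simp)]
  refine integral_congr_ae (.of_forall fun x ↦ ?_)
  dsimp only
  rw [ENNReal.toReal_ofReal (by positivity), smul_eq_mul, mul_assoc]

lemma integral_pow_mul_comp_sq_Ioi (d : ℕ) (f : ℝ → ℝ) :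
    ∫ y in Ioi 0, y ^ d * f (y ^ 2) = 1 / 2 * ∫ u in Ioi 0, u ^ ((d - 1) / 2 : ℝ) * f u := by
  rw [← integral_comp_rpow_Ioi_of_pos (g := fun u ↦ u ^ ((d - 1) / 2 : ℝ) * f u) two_pos,
    ← integral_const_mul]
  refine setIntegral_congr_fun measurableSet_Ioi fun y (hy : 0 < y) ↦ ?_
  have hpow : y ^ d = y ^ (2 - 1 : ℝ) * (y ^ (2 : ℝ)) ^ ((d - 1) / 2 : ℝ) := by
    rw [← rpow_natCast, ← rpow_mul hy.le, ← rpow_add hy]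
    ring_nf
  simp only [hpow, rpow_two, smul_eq_mul]
  ring

variable (E) in
theorem exists_integral_comp_sq_norm_stdGaussian [Nontrivial E] :
    ∃ c : ℝ, ∀ f : ℝ → ℝ, ∫ x, f (‖x‖ ^ 2) ∂stdGaussian E =
      c * ∫ u in Ioi 0, u ^ (finrank ℝ E / 2 - 1 : ℝ) * (exp (-(1 / 2 * u)) * f u) := by
  refine ⟨(2 * π) ^ (-(finrank ℝ E / 2 : ℝ)) *
    (finrank ℝ E * (volume.real (Metric.ball (0 : E) 1) * (1 / 2))), fun f ↦ ?_⟩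
  have hexp : ((finrank ℝ E - 1 : ℕ) - 1 : ℝ) / 2 = finrank ℝ E / 2 - 1 := by
    rw [Nat.cast_pred finrank_pos]
    ring
  rw [integral_stdGaussian,
    integral_fun_norm_addHaar volume fun y ↦ exp (-(1 / 2) * y ^ 2) * f (y ^ 2)]
  simp_rw [smul_eq_mul, nsmul_eq_mul]
  rw [integral_pow_mul_comp_sq_Ioi _ fun u ↦ exp (-(1 / 2) * u) * f u, hexp]
  simp_rw [neg_mul]
  ring

variable (E) in
theorem map_sq_norm_stdGaussian [Nontrivial E] :
    (stdGaussian E).map (fun x ↦ ‖x‖ ^ 2) = gammaMeasure (finrank ℝ E / 2) (1 / 2) := by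
  have ha : 0 < (finrank ℝ E / 2 : ℝ) := by
    have := finrank_pos (R := ℝ) (M := E)
    positivity
  have := isProbabilityMeasure_gammaMeasure ha (one_half_pos (α := ℝ))
  obtain ⟨c, hc⟩ := exists_integral_comp_sq_norm_stdGaussian E
  have hpol := hc fun _ ↦ 1
  have hgam := integral_gammaMeasure ha one_half_pos fun _ ↦ 1
  simp only [integral_const, probReal_univ, smul_eq_mul, mul_one] at hpol hgam
  refine ext_of_forall_integral_eq_of_IsFiniteMeasure fun f ↦ ?_
  rw [integral_map (by fun_prop) (by fun_prop), hc, integral_gammaMeasure ha one_half_pos]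
  congr 1
  exact mul_right_cancel₀ (right_ne_zero_of_mul (hgam ▸ one_ne_zero)) (hpol.symm.trans hgam)

lemma hasLogMean_map_sq_norm_stdGaussian {n : ℕ} (hE : finrank ℝ E = 2 * (n + 1)) :
    HasLogMean ((stdGaussian E).map (‖·‖ ^ 2))
      (harmonic n + (log 2 - eulerMascheroniConstant)) := by
  have : Nontrivial E := nontrivial_of_finrank_pos (R := ℝ) (by omega)
  have hshape : (finrank ℝ E / 2 : ℝ) = n + 1 := by
    rw [hE]
    push_cast
    ring
  have hmean : deriv Gamma (n + 1) / Gamma (n + 1) - log (1 / 2) =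
      harmonic n + (log 2 - eulerMascheroniConstant) := by
    rw [deriv_Gamma_nat, Gamma_nat_eq_factorial, mul_div_cancel_left₀ _ (by positivity), one_div,
      log_inv]
    ring
  have hgamma := hasLogMean_gammaMeasure (a := n + 1) (by positivity) (one_half_pos (α := ℝ))
  rwa [hmean, ← hshape, ← map_sq_norm_stdGaussian E] at hgamma

end Gauss

section GramDet

open Module

variable (𝕜 : Type*) {ι E F : Type*} [RCLike 𝕜] [NormedAddCommGroup E] [InnerProductSpace 𝕜 E]
  [NormedAddCommGroup F] [InnerProductSpace 𝕜 F]

lemma gram_toLp_transpose {κ : Type*} [Fintype κ] (H : Matrix κ ι 𝕜) :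
    gram 𝕜 (fun j ↦ WithLp.toLp 2 (Hᵀ j)) = Hᴴ * H :=
  gram_eq_conjTranspose_mul (EuclideanSpace.basisFun κ 𝕜) fun j ↦ WithLp.toLp 2 (Hᵀ j)

variable [Fintype ι]

lemma gram_sum_smul (w : ι → E) (T : Matrix ι ι 𝕜) :
    gram 𝕜 (fun j ↦ ∑ k, T k j • w k) = Tᴴ * gram 𝕜 w * T := by
  ext i j
  simp only [gram_apply, sum_inner, inner_sum, inner_smul_left, inner_smul_right, mul_apply,
    conjTranspose_apply, Finset.sum_mul, Finset.mul_sum, RCLike.star_def]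
  refine Finset.sum_congr rfl fun k _ ↦ Finset.sum_congr rfl fun l _ ↦ ?_
  ring

variable [DecidableEq ι]

/-- The Gram determinant `det (⟪xᵢ, xⱼ⟫)ᵢⱼ` of a family of vectors, a nonnegative real number. For
the columns of a matrix `H` it is `det (Hᴴ * H)`. -/
noncomputable def gramDet (x : ι → E) : ℝ := RCLike.re (gram 𝕜 x).det

@[simp]
lemma ofReal_gramDet (x : ι → E) : (gramDet 𝕜 x : 𝕜) = (gram 𝕜 x).det := by
  rw [gramDet, ← RCLike.conj_eq_iff_re, ← RCLike.star_def, ← det_conjTranspose,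
    (isHermitian_gram 𝕜 x).eq]

lemma gramDet_of_isEmpty [IsEmpty ι] (x : ι → E) : gramDet 𝕜 x = 1 := by simp [gramDet]

variable {𝕜} in
lemma gramDet_of_orthonormal {x : ι → E} (hx : Orthonormal 𝕜 x) : gramDet 𝕜 x = 1 := by
  rw [gramDet, gram_eq_one_iff_orthonormal.2 hx, det_one, RCLike.one_re]

lemma gramDet_linearIsometry_comp (f : E →ₗᵢ[𝕜] F) (x : ι → E) :
    gramDet 𝕜 (fun j ↦ f (x j)) = gramDet 𝕜 x := by
  simp only [gramDet, gram, f.inner_map_map]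

lemma continuous_gramDet : Continuous (gramDet 𝕜 : (ι → E) → ℝ) := by
  refine RCLike.continuous_re.comp (Continuous.matrix_det (continuous_matrix fun i j ↦ ?_))
  exact (continuous_apply i).inner (continuous_apply j)

@[fun_prop]
lemma measurable_gramDet [MeasurableSpace E] [BorelSpace E] [SecondCountableTopology E] :
    Measurable (gramDet 𝕜 : (ι → E) → ℝ) :=
  (continuous_gramDet 𝕜).measurable

lemma gramDet_sum_smul (w : ι → E) (T : Matrix ι ι 𝕜) :
    gramDet 𝕜 (fun j ↦ ∑ k, T k j • w k) = ‖T.det‖ ^ 2 * gramDet 𝕜 w := by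
  apply RCLike.ofReal_injective (K := 𝕜)
  rw [ofReal_gramDet, gram_sum_smul, det_mul, det_mul, det_conjTranspose, RCLike.ofReal_mul,
    ofReal_gramDet, RCLike.ofReal_pow, ← RCLike.conj_mul, RCLike.star_def]
  ring

lemma gramDet_cons {t : ℕ} (v : E) (x : Fin t → E) :
    gramDet 𝕜 (Fin.cons v x : Fin (t + 1) → E) =
      ‖v‖ ^ 2 * gramDet 𝕜 fun j ↦ (𝕜 ∙ v)ᗮ.orthogonalProjectionOnto (x j) := by
  set z : Fin t → E := fun j ↦ (𝕜 ∙ v)ᗮ.orthogonalProjectionOnto (x j)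
  have hv (j : Fin t) : inner 𝕜 (z j) v = 0 :=
    Submodule.inner_left_of_mem_orthogonal (Submodule.mem_span_singleton_self v) (Subtype.prop _)
  have hx (j : Fin t) : ∃ a : 𝕜, x j = z j + a • v := by
    obtain ⟨a, ha⟩ := Submodule.mem_span_singleton.1 ((𝕜 ∙ v).starProjection_apply_mem (x j))
    refine ⟨a, ?_⟩
    rw [ha, add_comm]
    exact ((𝕜 ∙ v).starProjection_add_starProjection_orthogonal (x j)).symm
  choose a ha using hx
  let B : Matrix (Fin (t + 1)) (Fin (t + 1)) 𝕜 :=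
    of fun i j ↦ inner 𝕜 ((Fin.cons v z : Fin (t + 1) → E) i) ((Fin.cons v x : Fin (t + 1) → E) j)
  have hdet : (gram 𝕜 (Fin.cons v x : Fin (t + 1) → E)).det = B.det := by
    refine det_eq_of_forall_row_eq_smul_add_const (Fin.cons 0 fun j ↦ star (a j)) 0 rfl ?_
    refine Fin.cases (fun j ↦ ?_) (fun i j ↦ ?_)
    · simp [B]
    · simp only [gram_apply, Fin.cons_succ, of_apply, Fin.cons_zero, B]
      nth_rw 1 [ha i]
      rw [inner_add_left, inner_smul_left, RCLike.star_def]
  have hsub : B.submatrix Fin.succ Fin.succ = gram 𝕜 z := by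
    ext i j
    simp [B, ha j, inner_add_right, inner_smul_right, hv]
  have hproj : gramDet 𝕜 (fun j ↦ (𝕜 ∙ v)ᗮ.orthogonalProjectionOnto (x j)) = gramDet 𝕜 z :=
    (gramDet_linearIsometry_comp 𝕜 (𝕜 ∙ v)ᗮ.subtypeₗᵢ _).symm
  apply RCLike.ofReal_injective (K := 𝕜)
  rw [hproj, RCLike.ofReal_mul, ofReal_gramDet, ofReal_gramDet, ← hsub, hdet,
    det_succ_column_zero, Fin.sum_univ_succ]
  simp [B, hv, inner_self_eq_norm_sq_to_K, Fin.succAbove_zero]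

lemma exists_linearIsometry_gramDet_adjoint [CompleteSpace E] {n : ℕ} (hn : finrank 𝕜 E = n + 1)
    {v : E} (hv : v ≠ 0) :
    ∃ g : EuclideanSpace 𝕜 (Fin n) →ₗᵢ[𝕜] E, ∀ {t : ℕ} (x : Fin t → E),
      gramDet 𝕜 (fun j ↦ g.toContinuousLinearMap.adjoint (x j)) =
        gramDet 𝕜 fun j ↦ (𝕜 ∙ v)ᗮ.orthogonalProjectionOnto (x j) := by
  have : Fact (finrank 𝕜 E = n + 1) := ⟨hn⟩
  let e := (OrthonormalBasis.fromOrthogonalSpanSingleton (𝕜 := 𝕜) n hv).repr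
  refine ⟨(𝕜 ∙ v)ᗮ.subtypeₗᵢ.comp e.symm.toLinearIsometry, fun x ↦ ?_⟩
  rw [← gramDet_linearIsometry_comp 𝕜 e.toLinearIsometry]
  congr with j : 1
  refine ext_inner_right 𝕜 fun z ↦ ?_
  rw [ContinuousLinearMap.adjoint_inner_left, ← e.symm.inner_map_map,
    LinearIsometryEquiv.coe_toLinearIsometry, e.symm_apply_apply,
    Submodule.inner_orthogonalProjectionOnto_eq_of_mem_right]
  rfl

lemma exists_linearIsometry_gramDet_cons [CompleteSpace E] {n : ℕ} (hn : finrank 𝕜 E = n + 1)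
    (v : E) :
    ∃ g : EuclideanSpace 𝕜 (Fin n) →ₗᵢ[𝕜] E, ∀ {t : ℕ} (x : Fin t → E),
      gramDet 𝕜 (Fin.cons v x : Fin (t + 1) → E) =
        ‖v‖ ^ 2 * gramDet 𝕜 fun j ↦ g.toContinuousLinearMap.adjoint (x j) := by
  obtain rfl | hv := eq_or_ne v 0
  · have := nontrivial_of_finrank_pos (R := 𝕜) (M := E) (hn ▸ n.succ_pos)
    obtain ⟨w, hw⟩ := exists_ne (0 : E)
    obtain ⟨g, -⟩ := exists_linearIsometry_gramDet_adjoint 𝕜 hn hw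
    exact ⟨g, by simp [gramDet_cons]⟩
  · obtain ⟨g, hg⟩ := exists_linearIsometry_gramDet_adjoint 𝕜 hn hv
    exact ⟨g, fun x ↦ by rw [gramDet_cons, hg]⟩

lemma exists_orthonormalBasis_eq_sum [FiniteDimensional 𝕜 E] {t m : ℕ} (ht : t ≤ m)
    (hm : finrank 𝕜 E = m) (x : Fin t → E) :
    ∃ (b : OrthonormalBasis (Fin m) 𝕜 E) (T : Matrix (Fin t) (Fin t) 𝕜),
      ∀ j, x j = ∑ k, T k j • b (Fin.castLE ht k) := by
  let f : Fin m → E := fun j ↦ if h : (j : ℕ) < t then x ⟨j, h⟩ else 0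
  have hfin : finrank 𝕜 E = Fintype.card (Fin m) := by simpa using hm
  let b := InnerProductSpace.gramSchmidtOrthonormalBasis hfin f
  refine ⟨b, of fun k j ↦ b.repr (x j) (Fin.castLE ht k), fun j ↦ ?_⟩
  have hx : f (Fin.castLE ht j) = x j := by simp [f]
  rw [← b.sum_repr (x j)]
  refine (Finset.sum_of_injOn (Fin.castLE ht) (Fin.castLE_injective ht).injOn (by simp [Set.MapsTo])
    (fun l _ hl ↦ ?_) (by simp)).symm
  have hjl : Fin.castLE ht j < l := by
    have htl : t ≤ l := by
      by_contra! h
      exact hl ⟨⟨l, h⟩, by simp⟩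
    exact j.2.trans_le htl
  have hrepr : b.repr (x j) l = 0 :=
    hx ▸ InnerProductSpace.gramSchmidtOrthonormalBasis_inv_triangular' hfin f hjl
  rw [hrepr, zero_smul]

end GramDet

section Ginibre

open Module ProbabilityTheory Real

lemma real_inner_eq_re_inner_euclideanSpace {ι : Type*} [Fintype ι] (x y : EuclideanSpace ℂ ι) :
    inner ℝ x y = (inner ℂ x y).re := by
  simp [PiLp.inner_apply, Complex.inner]

lemma map_adjoint_stdGaussian {ι κ : Type*} [Fintype ι] [Fintype κ]
    (g : EuclideanSpace ℂ κ →ₗᵢ[ℂ] EuclideanSpace ℂ ι) :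
    (stdGaussian (EuclideanSpace ℂ ι)).map g.toContinuousLinearMap.adjoint =
      stdGaussian (EuclideanSpace ℂ κ) := by
  refine map_stdGaussian_of_inner_eq (by fun_prop) (fun x y ↦ ?_) g.norm_map
  rw [real_inner_eq_re_inner_euclideanSpace, ContinuousLinearMap.adjoint_inner_left,
    real_inner_eq_re_inner_euclideanSpace]
  rfl

/-- The complex Ginibre ensemble: the law of `t` independent standard Gaussian vectors in `ℂⁿ`,
thought of as the columns of an `n × t` matrix. The real and imaginary parts of the entries have
variance `1`. -/
noncomputable def ginibre (n t : ℕ) : Measure (Fin t → EuclideanSpace ℂ (Fin n)) :=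
  Measure.pi fun _ ↦ stdGaussian (EuclideanSpace ℂ (Fin n))

namespace ginibre

instance (n t : ℕ) : IsProbabilityMeasure (ginibre n t) :=
  inferInstanceAs (IsProbabilityMeasure (Measure.pi _))

lemma map_adjoint {n r : ℕ} (t : ℕ)
    (g : EuclideanSpace ℂ (Fin r) →ₗᵢ[ℂ] EuclideanSpace ℂ (Fin n)) :
    (ginibre n t).map (fun x j ↦ g.toContinuousLinearMap.adjoint (x j)) = ginibre r t :=
  (measurePreserving_pi _ _ fun _ ↦ ⟨by fun_prop, map_adjoint_stdGaussian g⟩).map_eq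

lemma measurePreserving_cons (n t : ℕ) :
    MeasurePreserving
      (fun p : EuclideanSpace ℂ (Fin n) × (Fin t → EuclideanSpace ℂ (Fin n)) ↦
        (Fin.cons p.1 p.2 : Fin (t + 1) → EuclideanSpace ℂ (Fin n)))
      ((stdGaussian (EuclideanSpace ℂ (Fin n))).prod (ginibre n t)) (ginibre n (t + 1)) := by
  unfold ginibre
  convert (measurePreserving_piFinSuccAbove
    (fun _ : Fin (t + 1) ↦ stdGaussian (EuclideanSpace ℂ (Fin n))) 0).symm with p
  exact (Fin.insertNth_zero' p.1 p.2).symm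

instance isProbabilityMeasure_map_gramDet (n t : ℕ) :
    IsProbabilityMeasure ((ginibre n t).map (gramDet ℂ)) :=
  Measure.isProbabilityMeasure_map (by fun_prop)

lemma map_gramDet_succ_succ (n t : ℕ) :
    (ginibre (n + 1) (t + 1)).map (gramDet ℂ) =
      (stdGaussian (EuclideanSpace ℂ (Fin (n + 1)))).map (‖·‖ ^ 2) ∗ₘ
        (ginibre n t).map (gramDet ℂ) := by
  have hcons := measurePreserving_cons (n + 1) t
  rw [← hcons.map_eq, Measure.map_map (measurable_gramDet ℂ) hcons.measurable]
  refine map_prod_eq_mconv ((measurable_gramDet ℂ).comp hcons.measurable) (by fun_prop) fun v ↦ ?_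
  obtain ⟨g, hg⟩ := exists_linearIsometry_gramDet_cons ℂ (n := n) (by simp) v
  rw [← map_adjoint t g, Measure.map_map (measurable_gramDet ℂ) (by fun_prop),
    Measure.map_map (by fun_prop) ((measurable_gramDet ℂ).comp (by fun_prop))]
  exact congrArg (Measure.map · _) (funext hg)

theorem hasLogMean_map_gramDet {t n : ℕ} (h : t ≤ n) :
    HasLogMean ((ginibre n t).map (gramDet ℂ))
      (∑ j ∈ Finset.range t, (harmonic (n - j - 1) + (log 2 - eulerMascheroniConstant))) := by
  induction t generalizing n with
  | zero =>
    have hone : (gramDet ℂ : (Fin 0 → EuclideanSpace ℂ (Fin n)) → ℝ) = fun _ ↦ 1 :=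
      funext (gramDet_of_isEmpty ℂ)
    simpa [hone] using HasLogMean.dirac_one
  | succ t ih =>
    obtain ⟨n, rfl⟩ := Nat.exists_eq_add_one_of_ne_zero (by omega : n ≠ 0)
    have hnorm := hasLogMean_map_sq_norm_stdGaussian (E := EuclideanSpace ℂ (Fin (n + 1))) (n := n)
      (by rw [← finrank_mul_finrank ℝ ℂ]; simp)
    have := Measure.isProbabilityMeasure_map (f := (‖·‖ ^ 2))
      (μ := stdGaussian (EuclideanSpace ℂ (Fin (n + 1)))) (by fun_prop)
    rw [map_gramDet_succ_succ, Finset.sum_range_succ']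
    convert hnorm.mconv (ih (Nat.le_of_succ_le_succ h)) using 1
    simp [add_comm, Nat.add_sub_add_right]

end ginibre

end Ginibre

lemma map_mul_right_eq_self_of_isProbabilityMeasure {G : Type*} [Group G] [TopologicalSpace G]
    [IsTopologicalGroup G] [CompactSpace G] [MeasurableSpace G] [BorelSpace G] (μ : Measure G)
    [μ.IsHaarMeasure] [IsProbabilityMeasure μ] (g : G) : μ.map (· * g) = μ := by
  have := Measure.isProbabilityMeasure_map (μ := μ) (continuous_mul_const g).aemeasurable
  exact Measure.isHaarMeasure_eq_of_isProbabilityMeasure _ _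

section UnitaryGroup

variable (n 𝕜 : Type*) [Fintype n] [DecidableEq n] [RCLike 𝕜]

instance compactSpace_unitaryGroup : CompactSpace (unitaryGroup n 𝕜) := by
  have hball : IsCompact (X := Matrix n n 𝕜)
      (Set.univ.pi fun _ ↦ Set.univ.pi fun _ ↦ Metric.closedBall 0 1) :=
    isCompact_univ_pi fun _ ↦ isCompact_univ_pi fun _ ↦ isCompact_closedBall 0 1
  refine isCompact_iff_compactSpace.1 (hball.of_isClosed_subset isClosed_unitary fun U hU ↦ ?_)
  exact fun i _ j _ ↦ mem_closedBall_zero_iff.2 (entry_norm_bound_of_unitary hU i j)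

instance secondCountableTopology_unitaryGroup :
    SecondCountableTopology (unitaryGroup n 𝕜) := by
  have : SecondCountableTopology (Matrix n n 𝕜) :=
    inferInstanceAs (SecondCountableTopology (n → n → 𝕜))
  exact TopologicalSpace.Subtype.secondCountableTopology _

end UnitaryGroup

lemma exists_linearIsometry_adjoint_eq_toEuclideanLin {𝕜 m n : Type*} [RCLike 𝕜] [Fintype m]
    [DecidableEq m] [Fintype n] [DecidableEq n] {R : Matrix m n 𝕜} (hR : R * Rᴴ = 1) :
    ∃ g : EuclideanSpace 𝕜 m →ₗᵢ[𝕜] EuclideanSpace 𝕜 n,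
      ∀ x, g.toContinuousLinearMap.adjoint x = toEuclideanLin R x := by
  have hadj (y : EuclideanSpace 𝕜 m) (x : EuclideanSpace 𝕜 n) :
      inner 𝕜 (toEuclideanLin Rᴴ y) x = inner 𝕜 y (toEuclideanLin R x) := by
    rw [toEuclideanLin_conjTranspose_eq_adjoint, LinearMap.adjoint_inner_left]
  have hinv (y : EuclideanSpace 𝕜 m) : toEuclideanLin R (toEuclideanLin Rᴴ y) = y := by
    simp [toLpLin_apply, hR]
  refine ⟨(toEuclideanLin Rᴴ).isometryOfInner fun y z ↦ by rw [hadj, hinv], fun x ↦ ?_⟩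
  refine ext_inner_left 𝕜 fun y ↦ ?_
  rw [ContinuousLinearMap.adjoint_inner_right]
  exact hadj y x

lemma harmonic_add (a k : ℕ) :
    (harmonic (a + k) : ℝ) = harmonic a + ∑ i ∈ Finset.range k, 1 / ((a : ℝ) + 1 + i) := by
  induction k with
  | zero => simp
  | succ k ih =>
    rw [← add_assoc, harmonic_succ, Finset.sum_range_succ]
    push_cast
    rw [ih, one_div, add_right_comm (a : ℝ) 1 k, add_assoc]

lemma harmonic_sub_harmonic {m r j : ℕ} (hj : j < r) (hr : r ≤ m) :
    (harmonic (r - j - 1) : ℝ) - harmonic (m - j - 1) =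
      -∑ k ∈ Finset.range (m - r), 1 / ((r : ℝ) + k - j) := by
  obtain ⟨a, rfl⟩ := Nat.exists_eq_add_of_lt hj
  obtain ⟨l, rfl⟩ := Nat.exists_eq_add_of_le hr
  rw [show j + a + 1 - j - 1 = a by omega, show j + a + 1 + l - j - 1 = a + l by omega,
    harmonic_add, sub_add_cancel_left, Nat.add_sub_cancel_left]
  push_cast
  congr! 3
  ring

section Jacobi

variable {m r t : ℕ} (hr : r ≤ m) (ht : t ≤ m)

/-- The determinant `det (Hᴴ * H)` of the Jacobi channel matrix `H`, as a real number. -/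
noncomputable def jacobiDet (U : unitaryGroup (Fin m) ℂ) : ℝ :=
  (det ((jacobiH m t r hr ht U)ᴴ * jacobiH m t r hr ht U)).re

lemma gramDet_jacobiH_transpose (U : unitaryGroup (Fin m) ℂ) :
    gramDet ℂ (fun j ↦ WithLp.toLp 2 ((jacobiH m t r hr ht U)ᵀ j)) = jacobiDet hr ht U := by
  rw [gramDet, gram_toLp_transpose]
  rfl

lemma continuous_jacobiDet : Continuous (jacobiDet hr ht) := by
  have hH : Continuous (jacobiH m t r hr ht) := continuous_subtype_val.matrix_submatrix _ _
  exact Complex.continuous_re.comp (hH.matrix_conjTranspose.matrix_mul hH).matrix_det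

/-- The Gram determinant of the vectors obtained from `U x₁, …, U xₜ` by keeping the first `r`
coordinates. -/
noncomputable def truncatedGramDet (U : unitaryGroup (Fin m) ℂ)
    (x : Fin t → EuclideanSpace ℂ (Fin m)) : ℝ :=
  gramDet ℂ fun j ↦ toEuclideanLin (U.1.submatrix (Fin.castLE hr) id) (x j)

lemma continuous_truncatedGramDet :
    Continuous fun p : unitaryGroup (Fin m) ℂ × (Fin t → EuclideanSpace ℂ (Fin m)) ↦
      truncatedGramDet hr p.1 p.2 := by
  refine (continuous_gramDet ℂ).comp (continuous_pi fun j ↦ ?_)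
  simp only [toLpLin_apply]
  have hU : Continuous fun p : unitaryGroup (Fin m) ℂ × (Fin t → EuclideanSpace ℂ (Fin m)) ↦
      p.1.1.submatrix (Fin.castLE hr) id :=
    (continuous_subtype_val.comp continuous_fst).matrix_submatrix _ _
  have hx : Continuous fun p : unitaryGroup (Fin m) ℂ × (Fin t → EuclideanSpace ℂ (Fin m)) ↦
      (p.2 j).ofLp := by fun_prop
  exact (PiLp.continuous_toLp 2 _).comp (hU.matrix_mulVec hx)

lemma map_truncatedGramDet_ginibre (U : unitaryGroup (Fin m) ℂ) :
    (ginibre m t).map (truncatedGramDet hr U) = (ginibre r t).map (gramDet ℂ) := by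
  have hR : U.1.submatrix (Fin.castLE hr) id * (U.1.submatrix (Fin.castLE hr) id)ᴴ = 1 := by
    have hU : U.1 * U.1ᴴ = 1 := mem_unitaryGroup_iff.1 U.2
    rw [conjTranspose_submatrix, ← submatrix_mul _ _ _ id _ Function.bijective_id, hU,
      submatrix_one _ (Fin.castLE_injective hr)]
  obtain ⟨g, hg⟩ := exists_linearIsometry_adjoint_eq_toEuclideanLin hR
  rw [← ginibre.map_adjoint t g, Measure.map_map (measurable_gramDet ℂ) (by fun_prop)]
  simp_rw [Function.comp_def, hg]
  rfl

lemma exists_truncatedGramDet_eq_mul_jacobiDet (x : Fin t → EuclideanSpace ℂ (Fin m)) :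
    ∃ W : unitaryGroup (Fin m) ℂ, ∀ U,
      truncatedGramDet hr U x = gramDet ℂ x * jacobiDet hr ht (U * W) := by
  obtain ⟨b, T, hT⟩ := exists_orthonormalBasis_eq_sum ℂ ht (by simp) x
  let W : unitaryGroup (Fin m) ℂ := ⟨_,
    (EuclideanSpace.basisFun (Fin m) ℂ).toMatrix_orthonormalBasis_mem_unitary b⟩
  have hcol (U : unitaryGroup (Fin m) ℂ) (k : Fin t) :
      toEuclideanLin (U.1.submatrix (Fin.castLE hr) id) (b (Fin.castLE ht k)) =
        WithLp.toLp 2 ((jacobiH m t r hr ht (U * W))ᵀ k) := by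
    ext i
    simp [toLpLin_apply, jacobiH, W, mulVec, mul_apply, dotProduct, Module.Basis.toMatrix_apply]
  refine ⟨W, fun U ↦ ?_⟩
  have hx : gramDet ℂ x = ‖T.det‖ ^ 2 := by
    rw [funext hT, gramDet_sum_smul, gramDet_of_orthonormal, mul_one]
    exact b.orthonormal.comp _ (Fin.castLE_injective ht)
  rw [hx, ← gramDet_jacobiH_transpose, ← gramDet_sum_smul, truncatedGramDet]
  simp_rw [hT, map_sum, map_smul, hcol]

variable (μ : Measure (unitaryGroup (Fin m) ℂ)) [μ.IsHaarMeasure] [IsProbabilityMeasure μ]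

lemma map_truncatedGramDet_haar (x : Fin t → EuclideanSpace ℂ (Fin m)) :
    μ.map (truncatedGramDet hr · x) = (μ.map (jacobiDet hr ht)).map (gramDet ℂ x * ·) := by
  obtain ⟨W, hW⟩ := exists_truncatedGramDet_eq_mul_jacobiDet hr ht x
  have hjac := (continuous_jacobiDet hr ht).measurable
  rw [Measure.map_map (by fun_prop) hjac, funext hW]
  nth_rw 2 [← map_mul_right_eq_self_of_isProbabilityMeasure μ W]
  rw [Measure.map_map (by fun_prop) (continuous_mul_const W).measurable]
  rfl

theorem map_gramDet_ginibre_eq_mconv :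
    (ginibre r t).map (gramDet ℂ) =
      (ginibre m t).map (gramDet ℂ) ∗ₘ μ.map (jacobiDet hr ht) := by
  have hmeas : Measurable fun p : unitaryGroup (Fin m) ℂ × (Fin t → EuclideanSpace ℂ (Fin m)) ↦
      truncatedGramDet hr p.1 p.2 := (continuous_truncatedGramDet hr).measurable
  have hgin := map_prod_eq_of_forall_map_eq (μ := μ) hmeas (map_truncatedGramDet_ginibre hr)
  rw [← Measure.prod_swap, Measure.map_map hmeas measurable_swap] at hgin
  have hhaar := map_prod_eq_mconv (μ := ginibre m t) (ν := μ) (hmeas.comp measurable_swap)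
    (measurable_gramDet ℂ) (map_truncatedGramDet_haar hr ht μ)
  exact hgin.symm.trans hhaar

theorem hasLogMean_map_jacobiDet (htr : t ≤ r) :
    HasLogMean (μ.map (jacobiDet hr ht))
      (∑ j ∈ Finset.range t, ((harmonic (r - j - 1) : ℝ) - harmonic (m - j - 1))) := by
  have := Measure.isProbabilityMeasure_map (μ := μ)
    (continuous_jacobiDet hr ht).measurable.aemeasurable
  have hlaw := ginibre.hasLogMean_map_gramDet htr
  rw [map_gramDet_ginibre_eq_mconv hr ht μ] at hlaw
  convert (ginibre.hasLogMean_map_gramDet ht).of_mconv_left hlaw using 1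
  rw [← Finset.sum_sub_distrib]
  simp

end Jacobi

theorem jacobi_mean_log_det_general (m mt mr : ℕ) (h1 : mt ≤ mr) (h2 : mr ≤ m)
    (μ : Measure (Matrix.unitaryGroup (Fin m) ℂ)) [μ.IsHaarMeasure] [IsProbabilityMeasure μ] :
    (∀ᵐ U ∂μ, 0 < (Matrix.det
        ((jacobiH m mt mr h2 (h1.trans h2) U)ᴴ * jacobiH m mt mr h2 (h1.trans h2) U)).re) ∧
    (∫ U, Real.log ((Matrix.det
        ((jacobiH m mt mr h2 (h1.trans h2) U)ᴴ * jacobiH m mt mr h2 (h1.trans h2) U)).re) ∂μ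
      = -(∑ j ∈ Finset.range mt, ∑ k ∈ Finset.range (m - mr),
          1 / ((mr : ℝ) + k - j))) ∧
    (∫ U, Real.log ((Matrix.det
        ((jacobiH m mt mr h2 (h1.trans h2) U)ᴴ * jacobiH m mt mr h2 (h1.trans h2) U)).re) ∂μ
      = ∑ j ∈ Finset.range mt,
          ((harmonic (mr - j - 1) : ℝ) - (harmonic (m - j - 1) : ℝ))) := by
  have hdet := (continuous_jacobiDet h2 (h1.trans h2)).measurable.aemeasurable (μ := μ)
  have hlaw := hasLogMean_map_jacobiDet h2 (h1.trans h2) μ h1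
  have hsum : ∑ j ∈ Finset.range mt, ((harmonic (mr - j - 1) : ℝ) - harmonic (m - j - 1)) =
      -∑ j ∈ Finset.range mt, ∑ k ∈ Finset.range (m - mr), 1 / ((mr : ℝ) + k - j) := by
    rw [← Finset.sum_neg_distrib]
    exact Finset.sum_congr rfl fun j hj ↦
      harmonic_sub_harmonic ((Finset.mem_range.1 hj).trans_le h1) h2
  have hint := (integral_map hdet (by fun_prop)).symm.trans hlaw.integral_log
  exact ⟨ae_of_ae_map hdet hlaw.ae_pos, hint.trans hsum, hint⟩

/-- **Mean log-determinant of the Jacobi matrix.** If `mt ≤ mr` and `mt + mr ≤ m`,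
then `det (Hᴴ H) > 0` almost surely and
`E[ln det (Hᴴ H)] = − Σ_{j<mt} Σ_{k<m−mr} 1/(mr + k − j)`; equivalently
`E[ln det (Hᴴ H)] = Σ_{j<mt} (H_{mr−j−1} − H_{m−j−1})` with `H_n` the `n`-th harmonic
number (the digamma expression `Σ_j (ψ(mr−j) − ψ(m−j))`). The expectation is over
the Haar probability measure on the unitary group `U(m)`. -/
theorem jacobi_mean_log_det
    (m mt mr : ℕ) (hm : 0 < m) (hmt : 0 < mt) (hmr : 0 < mr)
    (h1 : mt ≤ mr) (h2 : mt + mr ≤ m)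
    (μ : Measure (Matrix.unitaryGroup (Fin m) ℂ))
    [μ.IsHaarMeasure] [IsProbabilityMeasure μ] :
    (∀ᵐ U ∂μ, 0 < (Matrix.det
        ((jacobiH m mt mr (le_trans (Nat.le_add_left mr mt) h2)
            (le_trans (Nat.le_add_right mt mr) h2) U)ᴴ *
          jacobiH m mt mr (le_trans (Nat.le_add_left mr mt) h2)
            (le_trans (Nat.le_add_right mt mr) h2) U)).re) ∧
    (∫ U, Real.log ((Matrix.det
        ((jacobiH m mt mr (le_trans (Nat.le_add_left mr mt) h2)
            (le_trans (Nat.le_add_right mt mr) h2) U)ᴴ *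
          jacobiH m mt mr (le_trans (Nat.le_add_left mr mt) h2)
            (le_trans (Nat.le_add_right mt mr) h2) U)).re) ∂μ
      = -(∑ j ∈ Finset.range mt, ∑ k ∈ Finset.range (m - mr),
          1 / ((mr : ℝ) + k - j))) ∧
    (∫ U, Real.log ((Matrix.det
        ((jacobiH m mt mr (le_trans (Nat.le_add_left mr mt) h2)
            (le_trans (Nat.le_add_right mt mr) h2) U)ᴴ *
          jacobiH m mt mr (le_trans (Nat.le_add_left mr mt) h2)
            (le_trans (Nat.le_add_right mt mr) h2) U)).re) ∂μ
      = ∑ j ∈ Finset.range mt,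
          ((harmonic (mr - j - 1) : ℝ) - (harmonic (m - j - 1) : ℝ))) :=
  jacobi_mean_log_det_general m mt mr h1 ((Nat.le_add_left mr mt).trans h2) μ
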